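/- arXiv:math/0011060 — 2 statements merged into one kernel-verified Lean document; each statement's English description precedes it below -/
import Mathlib

section
/- Let A be a skew-symmetric n×n real matrix and for S ⊆ {1,…,n} let p(S) be the Pfaffian of the principal minor of A indexed by S. If I₁, I₂ ⊆ {1,…,n} and I₁ Δ I₂ = {i₁ < i₂ < … < i_l}, then Σ_{j=1}^l (−1)^j · p(I₁ Δ {i_j}) · p(I₂ Δ {i_j}) = 0. -/
/-- The Pfaffian of an `N × N` matrix (intended for skew-symmetric matrices):
`Pf(A) = ∑_{σ ∈ S'_N} sign(σ) ∏_{k=1}^{N/2} a_{σ(2k-1) σ(2k)}`, where `S'_N` is the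
set of permutations `σ` of `{0, …, N-1}` such that `σ(2k)` is minimal among
`σ(2k), σ(2k+1), …, σ(N-1)` for each `k`.  It is `0` for odd `N` and `1` for `N = 0`. -/
noncomputable def pfaffian {N : ℕ} (A : Matrix (Fin N) (Fin N) ℝ) : ℝ :=
  if h : 2 ∣ N then
    ∑ σ ∈ Finset.univ.filter
        (fun σ : Equiv.Perm (Fin N) =>
          ∀ p q : Fin N, 2 ∣ (p : ℕ) → p ≤ q → σ p ≤ σ q),
      ((Equiv.Perm.sign σ : ℤ) : ℝ) *
        ∏ k : Fin (N / 2),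
          A (σ ⟨2 * (k : ℕ), by have := k.2; omega⟩)
            (σ ⟨2 * (k : ℕ) + 1, by have := k.2; omega⟩)
  else 0

/-- The Pfaffian of the principal minor of `A` indexed by the subset `S`,
with rows and columns of the minor taken in increasing order of index. -/
noncomputable def pfMinor {n : ℕ} (A : Matrix (Fin n) (Fin n) ℝ) (S : Finset (Fin n)) : ℝ :=
  pfaffian (Matrix.of fun p q : Fin S.card =>
    A ((S.orderIsoOfFin rfl p : S) : Fin n) ((S.orderIsoOfFin rfl q : S) : Fin n))

/-!
An alternating form `B` defines a linear functional `Pf` on the exterior algebra, with `Pf 1 = 1`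
and `Pf (v ∧ x) = Pf (B(v, ·) ⌋ x)`. On the ordered wedge `e_S` of the vectors `e_i`, `i ∈ S`, it is
the Pfaffian of the matrix `(B(e_i, e_j))`, since the sum over permutations satisfies the same
expansion along the first row.

Consider `F(I, J) = ∑_{i ∈ I} ± Pf(e_{I \ i}) Pf(e_i ∧ e_J)`, with sign the parity of the number of
elements of `I` below `i`. The terms with `i ∈ J` vanish; moving `e_i` into place in the others
gives the terms `i ∈ I \ J` of the exchange sum. On the other hand, expanding `Pf(e_i ∧ e_J)` gives
`F(I, J) = ∑_{i ∈ I, j ∈ J} ± B(e_i, e_j) Pf(e_{I \ i}) Pf(e_{J \ j})`, which changes sign when `I`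
and `J` are swapped. Hence `F(I, J) + F(J, I) = 0`, which is the exchange relation.
-/

section CountBelow

variable {ι : Type*} [LinearOrder ι] {S : Finset ι} {m i : ι}

/-- The number of elements of `S` below `i`; when `i ∈ S` this is the position of `i` in the
increasing enumeration of `S`, counted from `0`. -/
def countBelow (S : Finset ι) (i : ι) : ℕ := {k ∈ S | k < i}.card

lemma countBelow_eq_zero (h : ∀ k ∈ S, i ≤ k) : countBelow S i = 0 := by
  simpa [countBelow, Finset.filter_eq_empty_iff] using h

lemma countBelow_insert_of_lt (hm : m ∉ S) (hmi : m < i) :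
    countBelow (insert m S) i = countBelow S i + 1 := by
  rw [countBelow, Finset.filter_insert, if_pos hmi, Finset.card_insert_of_notMem (by simp [hm]),
    countBelow]

lemma neg_one_pow_countBelow_symmDiff {R : Type*} [CommRing R] (S T : Finset ι) (i : ι) :
    (-1 : R) ^ countBelow (symmDiff S T) i = (-1) ^ countBelow S i * (-1) ^ countBelow T i := by
  have hfilter : {k ∈ symmDiff S T | k < i} = symmDiff {k ∈ S | k < i} {k ∈ T | k < i} := by
    ext k; simp only [Finset.mem_filter, Finset.mem_symmDiff]; tauto
  have hparity (U V : Finset ι) : (symmDiff U V).card + 2 * (U ∩ V).card = U.card + V.card := by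
    have hU := Finset.card_sdiff_add_card_inter U V
    have hV := Finset.card_sdiff_add_card_inter V U
    rw [Finset.inter_comm] at hV
    have hUV : (symmDiff U V).card = (U \ V).card + (V \ U).card :=
      Finset.card_union_of_disjoint disjoint_sdiff_sdiff
    lia
  rw [← pow_add, countBelow, countBelow, countBelow, hfilter, ← hparity, pow_add, pow_mul]
  simp

lemma countBelow_map {κ : Type*} [LinearOrder κ] (e : ι ↪o κ) (S : Finset ι) (i : ι) :
    countBelow (S.map e.toEmbedding) (e i) = countBelow S i := by
  simp [countBelow, Finset.filter_map]

lemma countBelow_univ_fin {N : ℕ} (j : Fin N) : countBelow Finset.univ j = j := by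
  rw [countBelow, Finset.filter_gt_eq_Iio, Fin.card_Iio]

lemma countBelow_orderEmbOfFin (S : Finset ι) (j : Fin S.card) :
    countBelow S (S.orderEmbOfFin rfl j) = j := by
  have h := countBelow_map (S.orderEmbOfFin rfl) Finset.univ j
  rwa [S.map_orderEmbOfFin_univ rfl, countBelow_univ_fin] at h

end CountBelow

section OrderedWedge

open CliffordAlgebra (contractLeft contractLeft_one contractLeft_ι_mul)

variable {R M ι : Type*} [CommRing R] [AddCommGroup M] [Module R M] [LinearOrder ι]
  {S : Finset ι} {m i : ι}

variable (R) in
/-- The exterior product `v i₁ ∧ ⋯ ∧ v iₖ` of the vectors indexed by `S = {i₁ < ⋯ < iₖ}`. -/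
noncomputable def orderedWedge (v : ι → M) (S : Finset ι) : ExteriorAlgebra R M :=
  (S.sort.map fun i => ExteriorAlgebra.ι R (v i)).prod

@[simp]
lemma orderedWedge_empty (v : ι → M) : orderedWedge R v ∅ = 1 := by
  simp [orderedWedge]

lemma orderedWedge_insert_of_forall_lt (v : ι → M) (h : ∀ k ∈ S, m < k) :
    orderedWedge R v (insert m S) = ExteriorAlgebra.ι R (v m) * orderedWedge R v S := by
  rw [orderedWedge, Finset.sort_insert _ (fun k hk => (h k hk).le) fun hm => (h m hm).false,
    List.map_cons, List.prod_cons, orderedWedge]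

lemma orderedWedge_map {κ : Type*} [LinearOrder κ] (v : κ → M) (e : ι ↪o κ) (S : Finset ι) :
    orderedWedge R v (S.map e.toEmbedding) = orderedWedge R (v ∘ e) S := by
  rw [orderedWedge, ← StrictMonoOn.map_finsetSort e.toEmbedding S (e.strictMono.strictMonoOn _),
    List.map_map]
  rfl

lemma orderedWedge_univ_fin_succ {N : ℕ} (v : Fin (N + 1) → M) :
    orderedWedge R v Finset.univ =
      ExteriorAlgebra.ι R (v 0) * orderedWedge R (v ∘ Fin.succ) Finset.univ := by
  have huniv : (Finset.univ : Finset (Fin (N + 1))) =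
      insert 0 (Finset.univ.map (Fin.succOrderEmb N).toEmbedding) := by
    ext i; induction i using Fin.cases <;> simp
  rw [huniv, orderedWedge_insert_of_forall_lt v (by simp [Fin.pos_iff_ne_zero]), orderedWedge_map]
  rfl

lemma orderedWedge_univ_erase_fin {N : ℕ} (v : Fin (N + 1) → M) (j : Fin (N + 1)) :
    orderedWedge R v (Finset.univ.erase j) = orderedWedge R (v ∘ j.succAbove) Finset.univ := by
  have herase : Finset.univ.erase j = Finset.univ.map j.succAboveOrderEmb.toEmbedding := by
    ext i
    simp only [Finset.mem_erase, Finset.mem_univ, and_true, Finset.mem_map, true_and]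
    exact Fin.exists_succAbove_eq_iff.symm
  rw [herase, orderedWedge_map]
  rfl

lemma ι_mul_orderedWedge (v : ι → M) (i : ι) (S : Finset ι) :
    ExteriorAlgebra.ι R (v i) * orderedWedge R v S =
      if i ∈ S then 0 else (-1 : R) ^ countBelow S i • orderedWedge R v (insert i S) := by
  induction S using Finset.induction_on_min with
  | empty =>
    rw [orderedWedge_insert_of_forall_lt v (by simp)]
    simp [countBelow]
  | insert m S hm ih =>
    have hmS : m ∉ S := fun h => (hm m h).false
    rcases lt_trichotomy i m with him | rfl | hmi
    · have hi : ∀ k ∈ insert m S, i < k :=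
        Finset.forall_mem_insert _ _ _ |>.2 ⟨him, fun k hk => him.trans (hm k hk)⟩
      rw [if_neg fun h => (hi i h).false, countBelow_eq_zero fun k hk => (hi k hk).le,
        orderedWedge_insert_of_forall_lt v hi, pow_zero, one_smul]
    · rw [if_pos (Finset.mem_insert_self _ _), orderedWedge_insert_of_forall_lt v hm, ← mul_assoc,
        ExteriorAlgebra.ι_sq_zero, zero_mul]
    · rw [orderedWedge_insert_of_forall_lt v hm, ← mul_assoc,
        eq_neg_of_add_eq_zero_left (ExteriorAlgebra.ι_add_mul_swap (v i) (v m)), neg_mul,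
        mul_assoc, ih]
      by_cases hi : i ∈ S
      · simp [hi]
      · rw [if_neg hi, if_neg (by simp [hi, hmi.ne']), countBelow_insert_of_lt hmS hmi,
          Finset.insert_comm, orderedWedge_insert_of_forall_lt v
            (Finset.forall_mem_insert _ _ _ |>.2 ⟨hmi, hm⟩), mul_smul_comm, pow_succ, mul_neg_one,
          neg_smul]

lemma contractLeft_orderedWedge (d : Module.Dual R M) (v : ι → M) (S : Finset ι) :
    contractLeft d (orderedWedge R v S) =
      ∑ j ∈ S, ((-1) ^ countBelow S j * d (v j)) • orderedWedge R v (S.erase j) := by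
  induction S using Finset.induction_on_min with
  | empty => rw [orderedWedge_empty, contractLeft_one, Finset.sum_empty]
  | insert m S hm ih =>
    have hmS : m ∉ S := fun h => (hm m h).false
    have hm_le : ∀ k ∈ insert m S, m ≤ k :=
      Finset.forall_mem_insert _ _ _ |>.2 ⟨le_rfl, fun k hk => (hm k hk).le⟩
    have htail : ∀ j ∈ S, ((-1) ^ countBelow (insert m S) j * d (v j)) •
          orderedWedge R v ((insert m S).erase j) =
        -(ExteriorAlgebra.ι R (v m) *
          ((-1) ^ countBelow S j * d (v j)) • orderedWedge R v (S.erase j)) := fun j hj => by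
      rw [countBelow_insert_of_lt hmS (hm j hj), Finset.erase_insert_of_ne (hm j hj).ne,
        orderedWedge_insert_of_forall_lt v fun k hk => hm k (Finset.mem_of_mem_erase hk),
        mul_smul_comm, pow_succ, mul_neg_one, neg_mul, neg_smul]
    rw [orderedWedge_insert_of_forall_lt v hm, contractLeft_ι_mul, ih, Finset.sum_insert hmS,
      Finset.erase_insert hmS, countBelow_eq_zero hm_le, pow_zero, one_mul,
      Finset.sum_congr rfl htail, Finset.sum_neg_distrib, ← Finset.mul_sum, sub_eq_add_neg]

end OrderedWedge

section ExteriorPfaffian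

open CliffordAlgebra (contractLeft changeForm changeForm_one changeForm_ι_mul
  changeForm_contractLeft)

variable {R M ι : Type*} [CommRing R] [AddCommGroup M] [Module R M] [LinearOrder ι]
  {B : LinearMap.BilinForm R M} (hB : B.IsAlt)

/-- The Pfaffian of an alternating form `B` as a linear functional on the exterior algebra: it sends
`v₁ ∧ ⋯ ∧ vₖ` to the Pfaffian of the matrix `(B vᵢ vⱼ)`. It is the scalar part of Bourbaki's `λ_B`,
which is `CliffordAlgebra.changeForm`; with `-B` in place of `B`, the recursion
`exteriorPfaffian_ι_mul` carries no sign. -/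
noncomputable def exteriorPfaffian : ExteriorAlgebra R M →ₗ[R] R :=
  ExteriorAlgebra.algebraMapInv.toLinearMap ∘ₗ
    changeForm (Q := 0) (Q' := 0) (B := -B)
      ((LinearMap.BilinMap.toQuadraticMap_eq_zero.2 hB.neg).trans (sub_zero 0).symm)

@[simp]
lemma exteriorPfaffian_one : exteriorPfaffian hB 1 = 1 := by
  simp [exteriorPfaffian]

lemma exteriorPfaffian_ι_mul (m : M) (x : ExteriorAlgebra R M) :
    exteriorPfaffian hB (ExteriorAlgebra.ι R m * x) =
      exteriorPfaffian hB (contractLeft (B m) x) := by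
  have hι : ExteriorAlgebra.algebraMapInv (ExteriorAlgebra.ι R m) = 0 := by
    simp [ExteriorAlgebra.algebraMapInv]
  simp only [exteriorPfaffian, LinearMap.comp_apply, AlgHom.toLinearMap_apply, changeForm_ι_mul,
    changeForm_contractLeft, LinearMap.neg_apply, map_neg, sub_neg_eq_add, map_add, map_mul]
  rw [hι, zero_mul, zero_add]

lemma exteriorPfaffian_ι_mul_orderedWedge (m : M) (v : ι → M) (S : Finset ι) :
    exteriorPfaffian hB (ExteriorAlgebra.ι R m * orderedWedge R v S) =
      ∑ j ∈ S, (-1) ^ countBelow S j * B m (v j) *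
        exteriorPfaffian hB (orderedWedge R v (S.erase j)) := by
  simp [exteriorPfaffian_ι_mul, contractLeft_orderedWedge]

lemma sum_countBelow_mul_exteriorPfaffian (v : ι → M) (I J : Finset ι) :
    ∑ i ∈ I, (-1) ^ countBelow I i * exteriorPfaffian hB (orderedWedge R v (I.erase i)) *
        exteriorPfaffian hB (ExteriorAlgebra.ι R (v i) * orderedWedge R v J) =
      ∑ i ∈ I \ J, (-1) ^ countBelow (symmDiff I J) i *
        exteriorPfaffian hB (orderedWedge R v (symmDiff I {i})) *
        exteriorPfaffian hB (orderedWedge R v (symmDiff J {i})) := by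
  rw [Finset.sdiff_eq_filter, Finset.sum_filter]
  refine Finset.sum_congr rfl fun i hiI => ?_
  rw [ι_mul_orderedWedge]
  by_cases hiJ : i ∈ J
  · simp [hiJ]
  · have hI : symmDiff I {i} = I.erase i := by
      rw [symmDiff_of_ge (Finset.singleton_subset_iff.2 hiI), Finset.sdiff_singleton_eq_erase]
    have hJ : symmDiff J {i} = insert i J := by
      rw [(Finset.disjoint_singleton_right.2 hiJ).symmDiff_eq_sup, Finset.sup_eq_union,
        Finset.union_comm, Finset.insert_eq]
    rw [if_neg hiJ, if_pos hiJ, map_smul, smul_eq_mul, neg_one_pow_countBelow_symmDiff, hI, hJ]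
    ring

lemma sum_countBelow_mul_exteriorPfaffian_add_swap (v : ι → M) (I J : Finset ι) :
    ∑ i ∈ I, (-1) ^ countBelow I i * exteriorPfaffian hB (orderedWedge R v (I.erase i)) *
        exteriorPfaffian hB (ExteriorAlgebra.ι R (v i) * orderedWedge R v J) +
      ∑ j ∈ J, (-1) ^ countBelow J j * exteriorPfaffian hB (orderedWedge R v (J.erase j)) *
        exteriorPfaffian hB (ExteriorAlgebra.ι R (v j) * orderedWedge R v I) = 0 := by
  simp only [exteriorPfaffian_ι_mul_orderedWedge, Finset.mul_sum]
  rw [Finset.sum_comm (s := J), ← Finset.sum_add_distrib]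
  refine Finset.sum_eq_zero fun i _ => ?_
  rw [← Finset.sum_add_distrib]
  refine Finset.sum_eq_zero fun j _ => ?_
  rw [← hB.neg_eq (v i) (v j)]
  ring

theorem sum_symmDiff_exteriorPfaffian_mul (v : ι → M) (I J : Finset ι) :
    ∑ i ∈ symmDiff I J, (-1) ^ countBelow (symmDiff I J) i *
        exteriorPfaffian hB (orderedWedge R v (symmDiff I {i})) *
        exteriorPfaffian hB (orderedWedge R v (symmDiff J {i})) = 0 := by
  rw [symmDiff_def I J, Finset.sup_eq_union, Finset.sum_union disjoint_sdiff_sdiff,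
    ← Finset.sup_eq_union, ← symmDiff_def,
    ← sum_countBelow_mul_exteriorPfaffian_add_swap hB v I J, sum_countBelow_mul_exteriorPfaffian,
    sum_countBelow_mul_exteriorPfaffian, symmDiff_comm J I]
  simp only [mul_right_comm]

theorem pfaffian_exchange_general (v : ι → M) (I₁ I₂ : Finset ι) :
    ∑ j : Fin (symmDiff I₁ I₂).card,
      (-1) ^ ((j : ℕ) + 1) *
        exteriorPfaffian hB (orderedWedge R v
          (symmDiff I₁ {((symmDiff I₁ I₂).orderIsoOfFin rfl j : ι)})) *
        exteriorPfaffian hB (orderedWedge R v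
          (symmDiff I₂ {((symmDiff I₁ I₂).orderIsoOfFin rfl j : ι)})) = 0 := by
  have h := sum_symmDiff_exteriorPfaffian_mul hB v I₁ I₂
  rw [← Finset.sum_coe_sort, ← ((symmDiff I₁ I₂).orderIsoOfFin rfl).toEquiv.sum_comp] at h
  refine neg_eq_zero.1 (Eq.trans ?_ h)
  rw [← Finset.sum_neg_distrib]
  refine Finset.sum_congr rfl fun j _ => ?_
  simp only [RelIso.coe_fn_toEquiv, Finset.coe_orderIsoOfFin_apply, countBelow_orderEmbOfFin]
  ring

end ExteriorPfaffian

section PairPermutations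

open Equiv (Perm)

variable {N : ℕ}

/-- The permutation of `{0, …, N}` with first value `j` and further values `τ 0, τ 1, …`, read in
`{0, …, N} \ {j}` through `j.succAbove`. It reflects the expansion of a Pfaffian along a row. -/
def consPerm (j : Fin (N + 1)) (τ : Perm (Fin N)) : Perm (Fin (N + 1)) :=
  (Fin.cycleRange j)⁻¹ * Perm.decomposeFin.symm (0, τ)

@[simp]
lemma consPerm_zero (j : Fin (N + 1)) (τ : Perm (Fin N)) : consPerm j τ 0 = j := by
  simp [consPerm, Perm.inv_def]

@[simp]
lemma consPerm_succ (j : Fin (N + 1)) (τ : Perm (Fin N)) (k : Fin N) :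
    consPerm j τ k.succ = j.succAbove (τ k) := by
  simp [consPerm, Perm.inv_def]

lemma consPerm_zero_consPerm_one (j : Fin (N + 1)) (τ : Perm (Fin N)) :
    consPerm 0 (consPerm j τ) 1 = j.succ := by
  rw [← Fin.succ_zero_eq_one, consPerm_succ, consPerm_zero, Fin.succAbove_zero]

lemma sign_consPerm (j : Fin (N + 1)) (τ : Perm (Fin N)) :
    Perm.sign (consPerm j τ) = (-1) ^ (j : ℕ) * Perm.sign τ := by
  simp [consPerm]

lemma consPerm_inj {j j' : Fin (N + 1)} {τ τ' : Perm (Fin N)} :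
    consPerm j τ = consPerm j' τ' ↔ j = j' ∧ τ = τ' := by
  refine ⟨fun h => ?_, fun ⟨hj, hτ⟩ => hj ▸ hτ ▸ rfl⟩
  obtain rfl : j = j' := by simpa using congr($h 0)
  exact ⟨rfl, Equiv.ext fun k => by simpa using congr($h k.succ)⟩

lemma exists_consPerm_eq (σ : Perm (Fin (N + 1))) : ∃ τ, consPerm (σ 0) τ = σ := by
  obtain ⟨⟨p, τ⟩, h⟩ := Perm.decomposeFin.symm.surjective (Fin.cycleRange (σ 0) * σ)
  obtain rfl : p = 0 := by simpa using congr($h 0)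
  exact ⟨τ, by rw [consPerm, h, inv_mul_cancel_left]⟩

/-- Membership in the set `S'_N` of permutations over which `pfaffian` sums. -/
abbrev IsPfaffianPerm (σ : Perm (Fin N)) : Prop :=
  ∀ p q : Fin N, 2 ∣ (p : ℕ) → p ≤ q → σ p ≤ σ q

lemma IsPfaffianPerm.apply_zero {σ : Perm (Fin (N + 1))} (hσ : IsPfaffianPerm σ) : σ 0 = 0 := by
  simpa using hσ 0 (σ.symm 0) (by simp) (Fin.zero_le _)

lemma isPfaffianPerm_consPerm_zero_consPerm {j : Fin (N + 1)} {τ : Perm (Fin N)} :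
    IsPfaffianPerm (consPerm 0 (consPerm j τ)) ↔ IsPfaffianPerm τ := by
  constructor
  · intro h p q hp hpq
    simpa using h p.succ.succ q.succ.succ (by simpa [add_assoc] using hp) (by simpa using hpq)
  · intro h p q hp hpq
    induction p using Fin.cases with
    | zero => simp
    | succ p =>
      induction p using Fin.cases with
      | zero => simp at hp
      | succ p =>
        obtain ⟨q, rfl⟩ := Fin.exists_succ_eq.2 (Fin.ne_zero_of_lt (p.succ.succ_pos.trans_le hpq))
        obtain ⟨q, rfl⟩ := Fin.exists_succ_eq.2
          (Fin.ne_zero_of_lt (p.succ_pos.trans_le (Fin.succ_le_succ_iff.1 hpq)))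
        simpa using h p q (by simpa [add_assoc] using hp) (by simpa using hpq)

lemma sum_isPfaffianPerm {R : Type*} [AddCommMonoid R] (f : Perm (Fin (N + 2)) → R) :
    ∑ σ with IsPfaffianPerm σ, f σ =
      ∑ j, ∑ τ with IsPfaffianPerm τ, f (consPerm 0 (consPerm j τ)) := by
  rw [Finset.sum_sigma', eq_comm]
  refine Finset.sum_bij (fun x _ => consPerm 0 (consPerm x.1 x.2)) ?_ ?_ ?_ fun _ _ => rfl
  · rintro ⟨j, τ⟩ hτ
    simp only [Finset.mem_sigma, Finset.mem_univ, true_and, Finset.mem_filter] at hτ ⊢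
    exact isPfaffianPerm_consPerm_zero_consPerm.2 hτ
  · rintro ⟨j, τ⟩ _ ⟨j', τ'⟩ _ h
    obtain ⟨rfl, rfl⟩ := consPerm_inj.1 (consPerm_inj.1 h).2
    rfl
  · intro σ hσ
    replace hσ : IsPfaffianPerm σ := (Finset.mem_filter.1 hσ).2
    obtain ⟨ρ, hρ⟩ := exists_consPerm_eq σ
    obtain ⟨τ, hτ⟩ := exists_consPerm_eq ρ
    rw [hσ.apply_zero, ← hτ] at hρ
    rw [← hρ, isPfaffianPerm_consPerm_zero_consPerm] at hσ
    exact ⟨⟨ρ 0, τ⟩, Finset.mem_sigma.2 ⟨Finset.mem_univ _, Finset.mem_filter_univ _ |>.2 hσ⟩, hρ⟩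

lemma prod_pairs_succ {R : Type*} [CommMonoid R] (F : Fin (N + 2) → Fin (N + 2) → R) :
    ∏ k : Fin ((N + 2) / 2), F ⟨2 * k, by lia⟩ ⟨2 * k + 1, by lia⟩ =
      F 0 1 * ∏ k : Fin (N / 2),
        F (Fin.succ (Fin.succ ⟨2 * k, by lia⟩)) (Fin.succ (Fin.succ ⟨2 * k + 1, by lia⟩)) := by
  rw [← (finCongr (Nat.add_div_right N two_pos).symm).prod_comp, Fin.prod_univ_succ]
  rfl

lemma pfaffian_of_two_dvd (hN : 2 ∣ N) (A : Matrix (Fin N) (Fin N) ℝ) :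
    pfaffian A = ∑ σ : Perm (Fin N) with IsPfaffianPerm σ, ((Perm.sign σ : ℤ) : ℝ) *
      ∏ k : Fin (N / 2), A (σ ⟨2 * k, by lia⟩) (σ ⟨2 * k + 1, by lia⟩) :=
  dif_pos hN

lemma pfaffian_of_not_two_dvd (hN : ¬2 ∣ N) (A : Matrix (Fin N) (Fin N) ℝ) : pfaffian A = 0 :=
  dif_neg hN

lemma pfaffian_add_two (A : Matrix (Fin (N + 2)) (Fin (N + 2)) ℝ) :
    pfaffian A = ∑ j : Fin (N + 1), (-1) ^ (j : ℕ) * A 0 j.succ *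
      pfaffian (A.submatrix (Fin.succ ∘ j.succAbove) (Fin.succ ∘ j.succAbove)) := by
  by_cases hN : 2 ∣ N
  · simp only [pfaffian_of_two_dvd hN]
    rw [pfaffian_of_two_dvd (Nat.dvd_add_self_right.2 hN), sum_isPfaffianPerm]
    refine Finset.sum_congr rfl fun j _ => ?_
    rw [Finset.mul_sum]
    refine Finset.sum_congr rfl fun τ _ => ?_
    rw [prod_pairs_succ fun p q => A (consPerm 0 (consPerm j τ) p) (consPerm 0 (consPerm j τ) q),
      consPerm_zero, consPerm_zero_consPerm_one]
    simp only [consPerm_succ, Fin.succAbove_zero, sign_consPerm, Fin.coe_ofNat_eq_mod, Nat.zero_mod,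
      pow_zero, one_mul, Matrix.submatrix_apply, Function.comp_apply]
    push_cast
    ring
  · simp [pfaffian_of_not_two_dvd, hN]

end PairPermutations

section PrincipalMinors

variable {M : Type*} [AddCommGroup M] [Module ℝ M] {B : LinearMap.BilinForm ℝ M} (hB : B.IsAlt)

lemma pfaffian_eq_exteriorPfaffian {N : ℕ} (v : Fin N → M) :
    pfaffian (Matrix.of fun p q => B (v p) (v q)) =
      exteriorPfaffian hB (orderedWedge ℝ v Finset.univ) := by
  induction N using Nat.twoStepInduction with
  | zero => simp [pfaffian, Finset.univ_eq_empty]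
  | one =>
    rw [pfaffian_of_not_two_dvd (by simp), orderedWedge_univ_fin_succ,
      exteriorPfaffian_ι_mul_orderedWedge, Finset.univ_eq_empty, Finset.sum_empty]
  | more N ih _ =>
    rw [pfaffian_add_two, orderedWedge_univ_fin_succ, exteriorPfaffian_ι_mul_orderedWedge]
    refine Finset.sum_congr rfl fun j _ => ?_
    rw [countBelow_univ_fin, orderedWedge_univ_erase_fin, ← ih]
    rfl

lemma pfMinor_eq_exteriorPfaffian {n : ℕ} (v : Fin n → M) (S : Finset (Fin n)) :
    pfMinor (Matrix.of fun p q => B (v p) (v q)) S =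
      exteriorPfaffian hB (orderedWedge ℝ v S) := by
  conv_rhs => rw [← S.map_orderEmbOfFin_univ rfl]
  rw [orderedWedge_map, ← pfaffian_eq_exteriorPfaffian]
  rfl

lemma isAlt_toBilin'_of_transpose_eq_neg {R n : Type*} [CommRing R] [IsAddTorsionFree R] [Fintype n]
    [DecidableEq n] {A : Matrix n n R} (hA : A.transpose = -A) :
    (Matrix.toBilin' A).IsAlt := fun x => by
  have hneg : Matrix.toBilin' A x x = -Matrix.toBilin' A x x := by
    simp only [Matrix.toBilin'_apply']
    conv_lhs => rw [Matrix.dotProduct_mulVec, ← Matrix.mulVec_transpose, hA, Matrix.neg_mulVec,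
      neg_dotProduct, dotProduct_comm]
  exact self_eq_neg.1 hneg

lemma pfMinor_eq_exteriorPfaffian_single {n : ℕ} {A : Matrix (Fin n) (Fin n) ℝ}
    (hA : A.transpose = -A) (S : Finset (Fin n)) :
    pfMinor A S = exteriorPfaffian (isAlt_toBilin'_of_transpose_eq_neg hA)
      (orderedWedge ℝ (fun i => Pi.single i 1) S) := by
  have hgram : (Matrix.of fun p q => Matrix.toBilin' A (Pi.single p 1) (Pi.single q 1)) = A := by
    ext p q; simp [Matrix.toBilin'_single]
  rw [← pfMinor_eq_exteriorPfaffian, hgram]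

end PrincipalMinors

/-- **Pfaffian Grassmann–Plücker relations.** Let `A` be a skew-symmetric `n × n`
real matrix, and for `S ⊆ {1,…,n}` let `p S` be the Pfaffian of the principal minor
of `A` indexed by `S`.  If `I₁ Δ I₂ = {i₁ < i₂ < … < i_l}` then
`∑_{j=1}^l (−1)^j p(I₁ Δ {i_j}) p(I₂ Δ {i_j}) = 0`. -/
theorem pfaffian_exchange {n : ℕ} (A : Matrix (Fin n) (Fin n) ℝ)
    (hA : A.transpose = -A) (I₁ I₂ : Finset (Fin n)) :
    ∑ j : Fin (symmDiff I₁ I₂).card,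
      (-1 : ℝ) ^ ((j : ℕ) + 1) *
        pfMinor A (symmDiff I₁ {((symmDiff I₁ I₂).orderIsoOfFin rfl j : Fin n)}) *
        pfMinor A (symmDiff I₂ {((symmDiff I₁ I₂).orderIsoOfFin rfl j : Fin n)}) = 0 := by
  simpa only [pfMinor_eq_exteriorPfaffian_single hA] using pfaffian_exchange_general _ _ I₁ I₂
end

section
/- Let B be a k×n real matrix of rank k and D an (n−k)×n real matrix of rank n−k with B·Dᵗ = 0. Then the k+(n−k) = n by 2n block matrix ((B, 0), (0, D)), with the left block columns indexed by I and the right block columns indexed by I*, has totally isotropic row space with respect to the standard symmetric hyperbolic form on ℝ^{2n}, and the admissible n-subsets of J indexing its nonzero n×n minors are exactly the sets (S ∪ (I \ S)*) where S ranges over the bases of the matroid represented by B. -/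
/-- The `k × k` minor of a `k × n` matrix `C` on a set `S` of column indices, taken
in increasing order: it is the determinant of the columns of `C` indexed by `S` if
`S` has cardinality `k`, and `0` otherwise. -/
noncomputable def colDet {k n : ℕ} (C : Matrix (Fin k) (Fin n) ℝ)
    (S : Finset (Fin n)) : ℝ :=
  if h : S.card = k then
    Matrix.det (Matrix.of fun i j : Fin k => C i ((S.orderIsoOfFin h j : S) : Fin n))
  else 0

/-- We model `J = {1,…,n, 1*,…,n*}` as `Fin n ⊕ Fin n`, with `Sum.inl i` the
unstarred element `i` and `Sum.inr i` the starred element `i*`.  A set `S ⊆ J` is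
**admissible** if `S ∩ S* = ∅`, `*` being the involution `Sum.swap`. -/
def JAdmissible {n : ℕ} (S : Finset (Fin n ⊕ Fin n)) : Prop :=
  ∀ x ∈ S, Sum.swap x ∉ S

/-- The property that the square minor of a matrix `C` with columns indexed by
`J = Fin n ⊕ Fin n` on the set `S` of column indices is nonzero (stated via an
arbitrary enumeration of `S`; the vanishing of the determinant does not depend on
the enumeration chosen). -/
def HasNonzeroMinor {m : Type*} [Fintype m] [DecidableEq m] {n : ℕ}
    (C : Matrix m (Fin n ⊕ Fin n) ℝ) (S : Finset (Fin n ⊕ Fin n)) : Prop :=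
  ∃ φ : m → Fin n ⊕ Fin n, Function.Injective φ ∧ Finset.univ.image φ = S ∧
    Matrix.det (Matrix.of fun i j : m => C i (φ j)) ≠ 0

/-!
The admissible `n`-subsets of `J` are the sets `T ∪ (I \ T)*`. The corresponding columns of
`((B, 0), (0, D))` are those of `B` on `T` and those of `D` on `I \ T`, placed in complementary
summands, so they form a basis exactly when both parts do. The second condition follows from the
first, because the matroids of `B` and `D` are dual: if `B` has a column basis on `T` and a row
combination `b D` vanishes off `T`, then `b D` is a linear relation, supported on `T`, between the
columns of `B`. Hence `b D = 0`, and `b = 0` since the rows of `D` are independent.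
-/

open Matrix

section ColumnRelations

variable {R m p α β : Type*}

lemma card_le_of_linearIndepOn_col [Ring R] [StrongRankCondition R] [Fintype m]
    {C : Matrix m α R} {S : Finset α} (h : LinearIndepOn R C.col S) :
    S.card ≤ Fintype.card m := by
  simpa using LinearIndependent.fintype_card_le_finrank h

lemma eq_zero_of_mulVec_eq_zero_of_support_subset [CommRing R] [Fintype α] {C : Matrix m α R}
    {S : Finset α} (hC : LinearIndepOn R C.col S) {w : α → R} (hw : w.support ⊆ S)
    (hCw : C *ᵥ w = 0) : w = 0 := by
  have hw' : ∀ i ∉ S, w i = 0 := Function.support_subset_iff'.1 hw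
  have hsum : ∑ i ∈ S, w i • C.col i = 0 := by
    rw [Finset.sum_subset S.subset_univ fun i _ hi => by rw [hw' i hi, zero_smul], ← hCw]
    simp [mulVec_eq_sum, col]
  ext i
  by_cases hi : i ∈ S
  · exact linearIndepOn_finset_iff.1 hC w hsum i hi
  · exact hw' i hi

lemma linearIndepOn_col_fromBlocks_disjSum [Ring R] (B : Matrix m α R)
    (D : Matrix p β R) (T : Finset α) (U : Finset β) :
    LinearIndepOn R (fromBlocks B 0 0 D).col (T.disjSum U) ↔
      LinearIndepOn R B.col T ∧ LinearIndepOn R D.col U := by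
  have hrelation (f : α ⊕ β → R) :
      ∑ x ∈ T.disjSum U, f x • (fromBlocks B 0 0 D).col x = 0 ↔
        ∑ i ∈ T, f (.inl i) • B.col i = 0 ∧ ∑ i ∈ U, f (.inr i) • D.col i = 0 := by
    simp [funext_iff, Finset.sum_disjSum]
  simp only [linearIndepOn_finset_iff, hrelation]
  refine ⟨fun h => ⟨fun f hf i hi => ?_, fun g hg i hi => ?_⟩, ?_⟩
  · exact h (Sum.elim f 0) (by simpa using hf) (.inl i) (by simpa using hi)
  · exact h (Sum.elim 0 g) (by simpa using hg) (.inr i) (by simpa using hi)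
  · rintro ⟨hB, hD⟩ f ⟨hfT, hfU⟩ (i | i) hi
    · exact hB (f ∘ .inl) hfT i (by simpa using hi)
    · exact hD (f ∘ .inr) hfU i (by simpa using hi)

end ColumnRelations

section ColumnBases

variable {K m p α β : Type*} [Field K] [Fintype m] [Fintype p]

/-- The set `S` of columns of `C` is a basis of the matroid represented by `C`, when `C` has full
row rank. The cardinality is compared with the number of rows rather than with the rank, so that
this expresses the non-vanishing of a maximal minor: no `S` qualifies when the rows of `C` are
dependent. -/
def IsColBasis (C : Matrix m α K) (S : Finset α) : Prop :=
  S.card = Fintype.card m ∧ LinearIndepOn K C.col S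

lemma isColBasis_iff_det_ne_zero [DecidableEq m] [DecidableEq α] (C : Matrix m α K)
    {S : Finset α} {φ : m → α} (hφ : φ.Injective) (hS : Finset.univ.image φ = S) :
    IsColBasis C S ↔ (C.submatrix id φ).det ≠ 0 := by
  have hcard : S.card = Fintype.card m := by
    rw [← hS, Finset.card_image_of_injective _ hφ, Finset.card_univ]
  have hrange : (S : Set α) = Set.range φ := by simp [← hS]
  rw [IsColBasis, and_iff_right hcard, hrange, linearIndepOn_range_iff hφ, ← isUnit_iff_ne_zero,
    ← isUnit_iff_isUnit_det, ← linearIndependent_cols_iff_isUnit]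
  rfl

lemma exists_injective_image_univ_eq [DecidableEq α] {S : Finset α}
    (hS : S.card = Fintype.card m) :
    ∃ φ : m → α, φ.Injective ∧ Finset.univ.image φ = S := by
  have e : m ≃ S := Fintype.equivOfCardEq (by simp [hS])
  refine ⟨fun j => e j, Subtype.val_injective.comp e.injective, Finset.coe_injective ?_⟩
  simpa [Function.comp_def] using e.surjective.range_comp ((↑) : S → α)

lemma isColBasis_iff_vecMul_eq_zero (C : Matrix m α K) (S : Finset α) :
    IsColBasis C S ↔
      S.card = Fintype.card m ∧ ∀ v : m → K, (∀ x ∈ S, (v ᵥ* C) x = 0) → v = 0 := by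
  classical
  by_cases hS : S.card = Fintype.card m
  · obtain ⟨φ, hφ, rfl⟩ := exists_injective_image_univ_eq hS
    rw [isColBasis_iff_det_ne_zero C hφ rfl, and_iff_right hS, Ne, ← exists_vecMul_eq_zero_iff]
    have hentry (v : m → K) :
        v ᵥ* C.submatrix id φ = 0 ↔ ∀ x ∈ Finset.univ.image φ, (v ᵥ* C) x = 0 := by
      simp [funext_iff, vecMul, dotProduct]
    simp only [hentry, not_exists, not_and', ne_eq, not_not]
  · simp [IsColBasis, hS]

lemma linearIndependent_row_of_rank_eq_card [Fintype α] {C : Matrix m α K}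
    (hC : C.rank = Fintype.card m) : LinearIndependent K C.row := by
  rw [linearIndependent_iff_card_eq_finrank_span, Set.finrank, ← rank_eq_finrank_span_row, hC]

theorem IsColBasis.compl [Fintype α] [DecidableEq α] {B : Matrix m α K} {D : Matrix p α K}
    {T : Finset α} (hT : IsColBasis B T) (hcard : Fintype.card m + Fintype.card p = Fintype.card α)
    (hD : LinearIndependent K D.row) (hBD : B * Dᵀ = 0) : IsColBasis D Tᶜ := by
  refine (isColBasis_iff_vecMul_eq_zero D Tᶜ).2 ⟨?_, fun b hb => ?_⟩
  · rw [Finset.card_compl, hT.1, ← hcard, Nat.add_sub_cancel_left]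
  · have hker : B *ᵥ (b ᵥ* D) = 0 := by
      rw [← mulVec_transpose, mulVec_mulVec, hBD, zero_mulVec]
    have hsupp : (b ᵥ* D).support ⊆ T :=
      Function.support_subset_iff'.2 fun i hi => hb i (Finset.mem_compl.2 hi)
    have hbD : b ᵥ* D = 0 := eq_zero_of_mulVec_eq_zero_of_support_subset hT.2 hsupp hker
    exact vecMul_injective_iff.2 hD (hbD.trans (zero_vecMul D).symm)

theorem isColBasis_fromBlocks_disjSum (B : Matrix m α K) (D : Matrix p β K)
    (T : Finset α) (U : Finset β) :
    IsColBasis (fromBlocks B 0 0 D) (T.disjSum U) ↔ IsColBasis B T ∧ IsColBasis D U := by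
  simp only [IsColBasis, linearIndepOn_col_fromBlocks_disjSum, Finset.card_disjSum,
    Fintype.card_sum]
  constructor
  · rintro ⟨hcard, hB, hD⟩
    have hT := card_le_of_linearIndepOn_col hB
    have hU := card_le_of_linearIndepOn_col hD
    exact ⟨⟨by lia, hB⟩, ⟨by lia, hD⟩⟩
  · rintro ⟨⟨hT, hB⟩, ⟨hU, hD⟩⟩
    exact ⟨by rw [hT, hU], hB, hD⟩

end ColumnBases

lemma hasNonzeroMinor_iff_isColBasis {m : Type*} [Fintype m] [DecidableEq m] {n : ℕ}
    (C : Matrix m (Fin n ⊕ Fin n) ℝ) (S : Finset (Fin n ⊕ Fin n)) :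
    HasNonzeroMinor C S ↔ IsColBasis C S := by
  constructor
  · rintro ⟨φ, hφ, hS, hdet⟩
    exact (isColBasis_iff_det_ne_zero C hφ hS).2 hdet
  · intro h
    obtain ⟨φ, hφ, hS⟩ := exists_injective_image_univ_eq h.1
    exact ⟨φ, hφ, hS, (isColBasis_iff_det_ne_zero C hφ hS).1 h⟩

lemma colDet_ne_zero_iff_isColBasis {k n : ℕ} (C : Matrix (Fin k) (Fin n) ℝ)
    (T : Finset (Fin n)) : colDet C T ≠ 0 ↔ IsColBasis C T := by
  by_cases hT : T.card = k
  · rw [colDet, dif_pos hT]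
    exact (isColBasis_iff_det_ne_zero C (T.orderEmbOfFin hT).injective
      (T.image_orderEmbOfFin_univ hT)).symm
  · simp [colDet, IsColBasis, hT]

lemma disjSum_eq_image_union_image {α β : Type*} [DecidableEq α] [DecidableEq β]
    (T : Finset α) (U : Finset β) : T.disjSum U = T.image Sum.inl ∪ U.image Sum.inr := by
  ext (i | i) <;> simp

lemma card_eq_and_swap_notMem_iff_exists_disjSum_compl {ι : Type*}
    [Fintype ι] [DecidableEq ι] (S : Finset (ι ⊕ ι)) :
    (S.card = Fintype.card ι ∧ ∀ x ∈ S, x.swap ∉ S) ↔ ∃ T : Finset ι, S = T.disjSum Tᶜ := by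
  constructor
  · rintro ⟨hcard, hadm⟩
    have hsub : S ⊆ S.toLeft.disjSum S.toLeftᶜ :=
      Finset.subset_disjSum.2 ⟨subset_rfl, fun i hi => by
        simpa using hadm _ (Finset.mem_toRight.1 hi)⟩
    exact ⟨S.toLeft, Finset.eq_of_subset_of_card_le hsub (by
      rw [Finset.card_disjSum, Finset.card_add_card_compl, hcard])⟩
  · rintro ⟨T, rfl⟩
    refine ⟨by rw [Finset.card_disjSum, Finset.card_add_card_compl], ?_⟩
    rintro (i | i) <;> simp

section HyperbolicForm

variable {R ι m p : Type*} [CommSemiring R] [Fintype ι]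

/-- The standard symmetric form on `R^(ι ⊔ ι*)`, which pairs each coordinate `i` with `i*`. -/
def hyperbolicForm (x y : ι ⊕ ι → R) : R :=
  ∑ i, (x (.inl i) * y (.inr i) + x (.inr i) * y (.inl i))

theorem hyperbolicForm_row_fromBlocks_eq_zero {B : Matrix m ι R} {D : Matrix p ι R}
    (hBD : B * Dᵀ = 0) (r s : m ⊕ p) :
    hyperbolicForm ((fromBlocks B 0 0 D).row r) ((fromBlocks B 0 0 D).row s) = 0 := by
  have horth (i : m) (j : p) : ∑ x, B i x * D j x = 0 := congr_fun₂ hBD i j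
  rcases r with i | j <;> rcases s with i' | j'
  · simp [hyperbolicForm]
  · simpa [hyperbolicForm] using horth i j'
  · simpa [hyperbolicForm, mul_comm] using horth i' j
  · simp [hyperbolicForm]

end HyperbolicForm

theorem classical_embedding_representation_general {K m p ι : Type*} [Field K]
    [Fintype m] [Fintype p] [Fintype ι] [DecidableEq ι] (B : Matrix m ι K) (D : Matrix p ι K)
    (hcard : Fintype.card m + Fintype.card p = Fintype.card ι) (hD : D.rank = Fintype.card p)
    (hBD : B * Dᵀ = 0) :
    (∀ r s : m ⊕ p,
      hyperbolicForm ((fromBlocks B 0 0 D).row r) ((fromBlocks B 0 0 D).row s) = 0) ∧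
    ∀ S : Finset (ι ⊕ ι),
      (S.card = Fintype.card ι ∧ (∀ x ∈ S, x.swap ∉ S) ∧ IsColBasis (fromBlocks B 0 0 D) S) ↔
      ∃ T : Finset ι, IsColBasis B T ∧ S = T.disjSum Tᶜ := by
  refine ⟨hyperbolicForm_row_fromBlocks_eq_zero hBD, fun S => ?_⟩
  rw [← and_assoc, card_eq_and_swap_notMem_iff_exists_disjSum_compl]
  constructor
  · rintro ⟨⟨T, rfl⟩, hS⟩
    exact ⟨T, ((isColBasis_fromBlocks_disjSum B D T Tᶜ).1 hS).1, rfl⟩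
  · rintro ⟨T, hT, rfl⟩
    exact ⟨⟨T, rfl⟩, (isColBasis_fromBlocks_disjSum B D T Tᶜ).2
      ⟨hT, hT.compl hcard (linearIndependent_row_of_rank_eq_card hD) hBD⟩⟩

/-- Let `B` be a `k × n` real matrix of rank `k` and `D` an `(n−k) × n` real matrix
of rank `n−k` with `B·Dᵗ = 0`.  Then the `n × 2n` block matrix `((B, 0), (0, D))`
(left block columns indexed by `I`, right block columns by `I*`) has totally
isotropic row space with respect to the standard symmetric hyperbolic form on
`ℝ^{2n}`, and the admissible `n`-subsets of `J` indexing its nonzero `n × n` minors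
are exactly the sets `S ∪ (I \ S)*` where `S` ranges over the bases of the matroid
represented by `B`. -/
theorem classical_embedding_representation {n k : ℕ}
    (B : Matrix (Fin k) (Fin n) ℝ) (D : Matrix (Fin (n - k)) (Fin n) ℝ)
    (hk : k ≤ n) (hB : B.rank = k) (hD : D.rank = n - k)
    (hBD : B * D.transpose = 0) :
    (∀ r s : Fin k ⊕ Fin (n - k), ∑ i : Fin n,
      ((Matrix.fromBlocks B 0 0 D) r (Sum.inl i) *
          (Matrix.fromBlocks B 0 0 D) s (Sum.inr i) +
        (Matrix.fromBlocks B 0 0 D) r (Sum.inr i) *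
          (Matrix.fromBlocks B 0 0 D) s (Sum.inl i)) = 0) ∧
    (∀ S : Finset (Fin n ⊕ Fin n),
      (S.card = n ∧ JAdmissible S ∧ HasNonzeroMinor (Matrix.fromBlocks B 0 0 D) S) ↔
      ∃ T : Finset (Fin n), colDet B T ≠ 0 ∧
        S = T.image Sum.inl ∪ Tᶜ.image Sum.inr) := by
  have hcard : Fintype.card (Fin k) + Fintype.card (Fin (n - k)) = Fintype.card (Fin n) := by
    simpa using Nat.add_sub_of_le hk
  simpa only [hasNonzeroMinor_iff_isColBasis, colDet_ne_zero_iff_isColBasis,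
    disjSum_eq_image_union_image, Fintype.card_fin, hyperbolicForm, JAdmissible, row_apply] using
    classical_embedding_representation_general B D hcard (by simpa using hD) hBD
end
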